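/- Let n ≥ 3 be an odd integer, K a number field of degree n with signature (r1, r2), and O an order in K. Then the cardinality of H(O) equals 2^{r1+r2−1} times the cardinality of the 2-torsion subgroup of the class group of O: #H(O) = 2^{r1+r2−1} · #Cl₂(O). -/

import Mathlib

set_option synthInstance.maxHeartbeats 1000000
set_option maxHeartbeats 1000000
open NumberField FractionalIdeal

variable (K : Type) [Field K] [NumberField K] (O : Subring K) [IsFractionRing O K]

/-- The group of pairs `(I, δ)` where `I` is an invertible fractional `O`-ideal in `K` and
`δ ∈ Kˣ` with `I² = δ·O` and `N_{K/ℚ}(δ) > 0`.  (Here `toPrincipalIdeal O K δ` is the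
principal fractional ideal `δ·O`, as a unit of the monoid of fractional ideals.) -/
noncomputable def HPairs : Subgroup ((FractionalIdeal (nonZeroDivisors O) K)ˣ × Kˣ) where
  carrier := {p | p.1 ^ 2 = toPrincipalIdeal O K p.2 ∧ 0 < Algebra.norm ℚ (p.2 : K)}
  one_mem' := by
    refine ⟨?_, ?_⟩
    · rw [Prod.fst_one, one_pow, Prod.snd_one, _root_.map_one]
    · rw [Prod.snd_one, Units.val_one, _root_.map_one]
      exact one_pos
  mul_mem' := by
    rintro a b ⟨ha1, ha2⟩ ⟨hb1, hb2⟩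
    refine ⟨?_, ?_⟩
    · rw [Prod.fst_mul, mul_pow, ha1, hb1, Prod.snd_mul, _root_.map_mul]
    · rw [Prod.snd_mul, Units.val_mul, _root_.map_mul]
      exact mul_pos ha2 hb2
  inv_mem' := by
    rintro a ⟨ha1, ha2⟩
    refine ⟨?_, ?_⟩
    · rw [Prod.fst_inv, inv_pow, ha1, Prod.snd_inv, _root_.map_inv]
    · rw [Prod.snd_inv]
      have h1 : Algebra.norm ℚ ((a.2 : K)) * Algebra.norm ℚ ((↑(a.2)⁻¹ : K)) = 1 := by
        rw [← _root_.map_mul, ← Units.val_mul, mul_inv_cancel, Units.val_one, _root_.map_one]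
      have h2 : Algebra.norm ℚ ((↑(a.2)⁻¹ : K)) = (Algebra.norm ℚ ((a.2 : K)))⁻¹ :=
        eq_inv_of_mul_eq_one_right h1
      rw [h2]
      exact inv_pos.mpr ha2

/-- The subgroup of pairs of the form `(κ·O, κ²)` for `κ ∈ Kˣ`; quotienting by it identifies
`(I, δ)` with `(κI, κ²δ)`. -/
noncomputable def EqvPairs : Subgroup ((FractionalIdeal (nonZeroDivisors O) K)ˣ × Kˣ) :=
  ((toPrincipalIdeal O K).prod (powMonoidHom 2)).range

/-- The group `H(O)` of equivalence classes of pairs `(I, δ)` with `I² = δ·O` and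
`N(δ) > 0`, where `(I, δ) ∼ (κI, κ²δ)` for `κ ∈ Kˣ`. -/
noncomputable abbrev HGroup : Type :=
  HPairs K O ⧸ Subgroup.comap (HPairs K O).subtype (EqvPairs K O)

theorem aux_add {A B : Type*} [AddCommGroup A] [AddCommGroup B] [Module.Free ℤ A]
    [Module.Finite ℤ A] (f : B →+ A) (hf : Function.Injective f) (m : ℕ) (hm : m ≠ 0)
    (h : ∀ a : A, ∃ b, f b = m • a) :
    (nsmulAddMonoidHom 2 : B →+ B).range.index = 2 ^ Module.finrank ℤ A := by
  have hf' : Function.Injective f.toIntLinearMap := hf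
  have e := LinearEquiv.ofInjective f.toIntLinearMap hf'
  have : Module.Finite ℤ B := Module.Finite.equiv e.symm
  have : Module.Free ℤ B := Module.Free.of_equiv e.symm
  have h1 : Module.finrank ℤ B ≤ Module.finrank ℤ A :=
    LinearMap.finrank_le_finrank_of_injective hf'
  choose g hg using h
  let G : A →+ B := AddMonoidHom.mk' g (fun a b => hf (by simp [hg]))
  have hG : Function.Injective G.toIntLinearMap := by
    intro a b hab
    have : f (g a) = f (g b) := congrArg f hab
    rw [hg, hg] at this
    have tf : Module.IsTorsionFree ℤ A := inferInstance
    exact (smul_right_injective A (r := (m : ℤ)) (by exact_mod_cast hm)) (by simpa using this)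
  have h2 : Module.finrank ℤ A ≤ Module.finrank ℤ B :=
    LinearMap.finrank_le_finrank_of_injective hG
  have h3 := AddSubgroup.index_range_nsmul B 2
  rw [le_antisymm h2 h1]
  exact h3

theorem aux_mul {A B : Type*} [CommGroup A] [CommGroup B] [Module.Free ℤ (Additive A)]
    [Module.Finite ℤ (Additive A)] (f : B →* A) (hf : Function.Injective f) (m : ℕ) (hm : m ≠ 0)
    (h : ∀ a : A, ∃ b, f b = a ^ m) :
    (powMonoidHom 2 : B →* B).range.index = 2 ^ Module.finrank ℤ (Additive A) := by
  rw [← aux_add (MonoidHom.toAdditive f) hf m hm h]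
  rfl

/-- conductor -/
theorem aux_cond [Module.Finite ℤ O] :
    ∃ d : 𝓞 K, d ≠ 0 ∧ ∀ x : 𝓞 K, algebraMap (𝓞 K) K (d * x) ∈ O := by
  classical
  obtain ⟨s, hs⟩ := (Module.finite_def (R := ℤ) (M := 𝓞 K)).1 inferInstance
  obtain ⟨b, hb⟩ := IsLocalization.exist_integer_multiples_of_finset (nonZeroDivisors O)
    (s.image (fun x : 𝓞 K => algebraMap (𝓞 K) K x))
  have hint : IsIntegral ℤ ((b : O) : K) :=
    (Algebra.IsIntegral.isIntegral (R := ℤ) (b : O)).map (O.subtype.toIntAlgHom)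
  obtain ⟨d, hd⟩ := IsIntegralClosure.isIntegral_iff (A := 𝓞 K) |>.1 hint
  refine ⟨d, ?_, ?_⟩
  · intro h0
    have h1 : ((b : O) : K) = 0 := by rw [← hd, h0, _root_.map_zero]
    exact nonZeroDivisors.coe_ne_zero b (Subtype.ext h1)
  · intro x
    have hx : x ∈ Submodule.span ℤ (s : Set (𝓞 K)) := hs ▸ Submodule.mem_top
    rw [_root_.map_mul, hd]
    induction hx using Submodule.span_induction with
    | mem x hx =>
      obtain ⟨y, hy⟩ := hb x (Finset.mem_image_of_mem _ hx)
      have : (y : K) = ((b : O) : K) * algebraMap (𝓞 K) K x := by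
        rw [Algebra.smul_def] at hy
        exact hy
      show ((b : O) : K) * algebraMap (𝓞 K) K x ∈ O
      rw [← this]; exact y.2
    | zero => simp
    | add x y _ _ hx hy => rw [_root_.map_add, mul_add]; exact add_mem hx hy
    | smul a x _ hx => rw [map_zsmul, mul_smul_comm]; exact zsmul_mem hx a

theorem aux_pow [Module.Finite ℤ O] :
    ∃ k : ℕ, k ≠ 0 ∧ ∀ u : (𝓞 K)ˣ, algebraMap (𝓞 K) K ((u ^ k : (𝓞 K)ˣ) : 𝓞 K) ∈ O := by
  obtain ⟨d, hd, h⟩ := aux_cond K O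
  let I : Ideal (𝓞 K) := Ideal.span {d}
  have hI : I ≠ ⊥ := by simpa [I, Ideal.span_singleton_eq_bot] using hd
  have : Finite (𝓞 K ⧸ I) := Ideal.finiteQuotientOfFreeOfNeBot I hI
  refine ⟨Nat.card (𝓞 K ⧸ I)ˣ, Nat.card_pos.ne', fun u => ?_⟩
  have h1 : (Units.map (Ideal.Quotient.mk I : 𝓞 K →* 𝓞 K ⧸ I) u) ^ Nat.card (𝓞 K ⧸ I)ˣ = 1 :=
    pow_card_eq_one'
  rw [← _root_.map_pow] at h1
  have h2 := congrArg Units.val h1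
  simp only [Units.coe_map, Units.val_one] at h2
  have h3 : Ideal.Quotient.mk I ((u ^ Nat.card (𝓞 K ⧸ I)ˣ : (𝓞 K)ˣ) : 𝓞 K) = Ideal.Quotient.mk I 1 := by
    rw [_root_.map_one]; exact h2
  rw [Ideal.Quotient.eq, Ideal.mem_span_singleton'] at h3
  obtain ⟨a, ha⟩ := h3
  rw [eq_add_of_sub_eq ha.symm, mul_comm, _root_.map_add, _root_.map_one]
  exact add_mem (h a) (one_mem O)

theorem aux_prin (x : Kˣ) : toPrincipalIdeal O K x = 1 ↔ (x : K) ∈ O ∧ ((x⁻¹ : Kˣ) : K) ∈ O := by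
  have key : ∀ y : Kˣ, spanSingleton (nonZeroDivisors O) (y : K) ≤ 1 ↔ (y : K) ∈ O := by
    intro y
    rw [FractionalIdeal.spanSingleton_le_iff_mem, FractionalIdeal.mem_one_iff]
    constructor
    · rintro ⟨z, hz⟩; rw [← hz]; exact z.2
    · intro h; exact ⟨⟨_, h⟩, rfl⟩
  rw [← key, ← key, toPrincipalIdeal_eq_iff, Units.val_one]
  have hm : spanSingleton (nonZeroDivisors O) (x : K) *
      spanSingleton (nonZeroDivisors O) ((x⁻¹ : Kˣ) : K) = 1 := by
    rw [spanSingleton_mul_spanSingleton, ← Units.val_mul, mul_inv_cancel, Units.val_one, spanSingleton_one]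
  constructor
  · intro h
    rw [h, one_mul] at hm
    exact ⟨h.le, hm.le⟩
  · rintro ⟨h1, h2⟩
    refine le_antisymm h1 ?_
    calc 1 = _ := hm.symm
      _ ≤ spanSingleton (nonZeroDivisors O) (x : K) * 1 := by gcongr
      _ = _ := mul_one _

/-- positive norm units of `O`, inside the units of the maximal order -/
noncomputable def BUnits : Subgroup (𝓞 K)ˣ where
  carrier := {u | toPrincipalIdeal O K (Units.map (algebraMap (𝓞 K) K : 𝓞 K →* K) u) = 1 ∧
    0 < Algebra.norm ℚ (algebraMap (𝓞 K) K (u : 𝓞 K))}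
  one_mem' := by simp
  mul_mem' := by
    rintro a b ⟨ha1, ha2⟩ ⟨hb1, hb2⟩
    refine ⟨?_, ?_⟩
    · rw [_root_.map_mul, _root_.map_mul, ha1, hb1, one_mul]
    · rw [Units.val_mul, _root_.map_mul, _root_.map_mul]
      exact mul_pos ha2 hb2
  inv_mem' := by
    rintro a ⟨ha1, ha2⟩
    refine ⟨?_, ?_⟩
    · rw [_root_.map_inv, _root_.map_inv, ha1, inv_one]
    · have h1 : Algebra.norm ℚ (algebraMap (𝓞 K) K (a : 𝓞 K)) * Algebra.norm ℚ (algebraMap (𝓞 K) K ((a⁻¹ : (𝓞 K)ˣ) : 𝓞 K)) = 1 := by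
        rw [← _root_.map_mul, ← _root_.map_mul, ← Units.val_mul, mul_inv_cancel, Units.val_one,
          _root_.map_one, _root_.map_one]
      rw [eq_inv_of_mul_eq_one_right h1]
      exact inv_pos.mpr ha2

theorem norm_neg_odd (hodd : Odd (Module.finrank ℚ K)) (x : K) :
    Algebra.norm ℚ (-x) = - Algebra.norm ℚ x := by
  have h : Algebra.norm ℚ (-1 : K) = -1 := by
    have := Algebra.norm_algebraMap (R := ℚ) (S := K) (-1)
    rw [hodd.neg_one_pow] at this
    simpa using this
  rw [← neg_one_mul, _root_.map_mul, h, neg_one_mul]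

theorem index_BUnits (hodd : Odd (Module.finrank ℚ K)) [Module.Finite ℤ O] :
    (powMonoidHom 2 : BUnits K O →* BUnits K O).range.index = 2 ^ Units.rank K := by
  rw [← Units.finrank_modTorsion]
  obtain ⟨k, hk, h⟩ := aux_pow K O
  refine aux_mul ((QuotientGroup.mk' (Units.torsion K)).comp (BUnits K O).subtype) ?_ (k * 2)
    (by positivity) ?_
  · rw [injective_iff_map_eq_one]
    rintro ⟨u, hu1, hu2⟩ hu
    have hu' : u ∈ Units.torsion K := (QuotientGroup.eq_one_iff u).1 hu
    rcases Units.torsion_eq_one_or_neg_one_of_odd_finrank hodd ⟨u, hu'⟩ with h | h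
    · exact Subtype.ext h
    · exfalso
      change u = -1 at h
      subst h
      rw [Units.val_neg, _root_.map_neg, norm_neg_odd K hodd] at hu2
      simp at hu2
      linarith
  · intro a
    obtain ⟨u, rfl⟩ := QuotientGroup.mk_surjective a
    have hO : ∀ u : (𝓞 K)ˣ, algebraMap (𝓞 K) K ((u ^ (k * 2) : (𝓞 K)ˣ) : 𝓞 K) ∈ O := by
      intro u
      rw [mul_comm, pow_mul]
      exact h _
    refine ⟨⟨u ^ (k * 2), ?_, ?_⟩, rfl⟩
    · rw [aux_prin]
      refine ⟨hO u, ?_⟩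
      rw [← _root_.map_inv, ← inv_pow]
      exact hO u⁻¹
    · rw [pow_mul, Units.val_pow_eq_pow_val, _root_.map_pow, _root_.map_pow]
      have : Algebra.norm ℚ ((algebraMap (𝓞 K) K (u : 𝓞 K)) ^ k) ≠ 0 := by
        rw [Algebra.norm_ne_zero_iff]
        exact pow_ne_zero _ (Units.coe_ne_zero u)
      rw [Units.val_pow_eq_pow_val, _root_.map_pow (algebraMap (𝓞 K) K)]
      exact sq_pos_of_ne_zero this

theorem EqvPairs_le : EqvPairs K O ≤ HPairs K O := by
  rintro _ ⟨x, rfl⟩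
  refine ⟨(_root_.map_pow (toPrincipalIdeal O K) x 2).symm, ?_⟩
  change 0 < Algebra.norm ℚ ((x ^ 2 : Kˣ) : K)
  rw [Units.val_pow_eq_pow_val, _root_.map_pow]
  exact sq_pos_of_ne_zero (Algebra.norm_ne_zero_iff.2 x.ne_zero)

/-- the map from `H(O)` to the class group -/
noncomputable def FMap : HGroup K O →*
    (FractionalIdeal (nonZeroDivisors O) K)ˣ ⧸ (toPrincipalIdeal O K).range :=
  QuotientGroup.lift _ ((QuotientGroup.mk' (toPrincipalIdeal O K).range).comp
    ((MonoidHom.fst _ _).comp (HPairs K O).subtype)) (by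
      rintro ⟨p, hp⟩ ⟨x, hx⟩
      refine (QuotientGroup.eq_one_iff _).2 ⟨x, ?_⟩
      exact congrArg Prod.fst hx)

/-- the map from positive units to `H(O)` -/
noncomputable def GMap : BUnits K O →* HGroup K O :=
  (QuotientGroup.mk' _).comp
    { toFun := fun u => (⟨(1, Units.map (algebraMap (𝓞 K) K : 𝓞 K →* K) u.1),
        by rw [one_pow]; exact u.2.1.symm, u.2.2⟩ : HPairs K O)
      map_one' := by ext1; simp
      map_mul' := fun a b => by ext1; simp }

/-- units of `O` lift to units of the maximal order -/
theorem exists_unit_of_prin [Module.Finite ℤ O] (x : Kˣ) (h : toPrincipalIdeal O K x = 1) :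
    ∃ u : (𝓞 K)ˣ, Units.map (algebraMap (𝓞 K) K : 𝓞 K →* K) u = x := by
  obtain ⟨h1, h2⟩ := (aux_prin K O x).1 h
  have hint : ∀ y ∈ O, IsIntegral ℤ y := fun y hy =>
    (Algebra.IsIntegral.isIntegral (R := ℤ) (⟨y, hy⟩ : O)).map (O.subtype.toIntAlgHom)
  obtain ⟨a, ha⟩ := IsIntegralClosure.isIntegral_iff (A := 𝓞 K) |>.1 (hint _ h1)
  obtain ⟨b, hb⟩ := IsIntegralClosure.isIntegral_iff (A := 𝓞 K) |>.1 (hint _ h2)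
  have hab : a * b = 1 := by
    apply FaithfulSMul.algebraMap_injective (𝓞 K) K
    rw [_root_.map_mul, ha, hb, _root_.map_one, ← Units.val_mul, mul_inv_cancel, Units.val_one]
  exact ⟨Units.mkOfMulEqOne a b hab, Units.ext ha⟩

theorem range_GMap [Module.Finite ℤ O] : (GMap K O).range = (FMap K O).ker := by
  ext c
  constructor
  · rintro ⟨u, rfl⟩
    exact (QuotientGroup.eq_one_iff _).2 (one_mem _)
  · intro hc
    obtain ⟨⟨⟨I, δ⟩, hp1, hp2⟩, rfl⟩ := QuotientGroup.mk_surjective c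
    obtain ⟨x, hx⟩ := (QuotientGroup.eq_one_iff (N := (toPrincipalIdeal O K).range) I).1 hc
    have h1 : toPrincipalIdeal O K (δ * (x ^ 2)⁻¹) = 1 := by
      rw [_root_.map_mul, _root_.map_inv, _root_.map_pow, hx, ← hp1]
      exact mul_inv_cancel _
    obtain ⟨u, hu⟩ := exists_unit_of_prin K O _ h1
    have hδ : δ = Units.map (algebraMap (𝓞 K) K : 𝓞 K →* K) u * x ^ 2 := by
      rw [hu]; simp
    have hN : 0 < Algebra.norm ℚ (algebraMap (𝓞 K) K (u : 𝓞 K)) := by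
      change 0 < Algebra.norm ℚ (δ : K) at hp2
      rw [hδ, Units.val_mul, _root_.map_mul, Units.val_pow_eq_pow_val, _root_.map_pow] at hp2
      exact pos_of_mul_pos_left hp2 (sq_nonneg _)
    refine ⟨⟨u, by rw [hu]; exact h1, hN⟩, ?_⟩
    refine QuotientGroup.eq.2 ⟨x, ?_⟩
    refine Prod.ext ?_ ?_
    · change toPrincipalIdeal O K x = 1⁻¹ * I
      rw [hx, inv_one, one_mul]
    · change x ^ 2 = (Units.map (algebraMap (𝓞 K) K : 𝓞 K →* K) u)⁻¹ * δ
      rw [hδ, inv_mul_cancel_left]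

theorem ker_GMap (hodd : Odd (Module.finrank ℚ K)) [Module.Finite ℤ O] :
    (GMap K O).ker = (powMonoidHom 2 : BUnits K O →* BUnits K O).range := by
  have hinj : Function.Injective (Units.map (algebraMap (𝓞 K) K : 𝓞 K →* K)) :=
    Units.map_injective (FaithfulSMul.algebraMap_injective (𝓞 K) K)
  ext u
  constructor
  · intro hu
    obtain ⟨x, hx⟩ := (QuotientGroup.eq_one_iff _).1 hu
    have hx1 : toPrincipalIdeal O K x = 1 := congrArg Prod.fst hx
    have hx2 : x ^ 2 = Units.map (algebraMap (𝓞 K) K : 𝓞 K →* K) u.1 := congrArg Prod.snd hx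
    have key : ∀ y : Kˣ, toPrincipalIdeal O K y = 1 →
        y ^ 2 = Units.map (algebraMap (𝓞 K) K : 𝓞 K →* K) u.1 →
        0 < Algebra.norm ℚ (y : K) → u ∈ (powMonoidHom 2 : BUnits K O →* BUnits K O).range := by
      intro y hy1 hy2 hy3
      obtain ⟨v, rfl⟩ := exists_unit_of_prin K O y hy1
      refine ⟨⟨v, hy1, hy3⟩, Subtype.ext (hinj ?_)⟩
      rw [← hy2, ← _root_.map_pow]
      rfl
    rcases lt_or_gt_of_ne (Algebra.norm_ne_zero_iff (R := ℚ).2 x.ne_zero) with h | h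
    · refine key (-x) ?_ (by rw [neg_sq, hx2]) ?_
      · rw [aux_prin] at hx1 ⊢
        refine ⟨?_, ?_⟩
        · simpa using hx1.1
        · simpa using hx1.2
      · rw [Units.val_neg, norm_neg_odd K hodd]
        linarith
    · exact key x hx1 hx2 h
  · rintro ⟨v, rfl⟩
    refine (QuotientGroup.eq_one_iff _).2 ⟨Units.map (algebraMap (𝓞 K) K : 𝓞 K →* K) v.1, ?_⟩
    refine Prod.ext v.2.1 ?_
    change (Units.map (algebraMap (𝓞 K) K : 𝓞 K →* K) v.1) ^ 2 =
      Units.map (algebraMap (𝓞 K) K : 𝓞 K →* K) (v.1 ^ 2)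
    rw [_root_.map_pow]

theorem mem_range_FMap (hodd : Odd (Module.finrank ℚ K))
    (c : (FractionalIdeal (nonZeroDivisors O) K)ˣ ⧸ (toPrincipalIdeal O K).range) :
    c ∈ (FMap K O).range ↔ c ^ 2 = 1 := by
  constructor
  · rintro ⟨p, rfl⟩
    obtain ⟨⟨⟨I, δ⟩, hp1, hp2⟩, rfl⟩ := QuotientGroup.mk_surjective p
    exact (QuotientGroup.eq_one_iff (N := (toPrincipalIdeal O K).range) (I ^ 2)).2 ⟨δ, hp1.symm⟩
  · intro hc
    obtain ⟨I, rfl⟩ := QuotientGroup.mk_surjective c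
    obtain ⟨x, hx⟩ := (QuotientGroup.eq_one_iff (N := (toPrincipalIdeal O K).range) (I ^ 2)).1 hc
    rcases lt_or_gt_of_ne (Algebra.norm_ne_zero_iff (R := ℚ).2 x.ne_zero) with h | h
    · refine ⟨QuotientGroup.mk ⟨(I, -x), ?_, ?_⟩, rfl⟩
      · have : toPrincipalIdeal O K (-1) = 1 := by rw [aux_prin]; simp
        change I ^ 2 = toPrincipalIdeal O K (-x)
        rw [← hx, ← neg_one_mul, _root_.map_mul, this, one_mul]
      · change 0 < Algebra.norm ℚ ((-x : Kˣ) : K)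
        rw [Units.val_neg, norm_neg_odd K hodd]
        linarith
    · exact ⟨QuotientGroup.mk ⟨(I, x), hx.symm, h⟩, rfl⟩

/-- **The order of `H(O)`.** For an order `O` in a degree `n` number field `K` of signature
`(r1, r2)`, with `n ≥ 3` odd, one has `#H(O) = 2^(r1+r2-1) · #Cl₂(O)`. -/
theorem card_HGroup_eq (n r1 r2 : ℕ) (hodd : Odd n) (hn : 3 ≤ n)
    (hdeg : Module.finrank ℚ K = n)
    (hr1 : Nat.card {w : InfinitePlace K // w.IsReal} = r1)
    (hr2 : Nat.card {w : InfinitePlace K // w.IsComplex} = r2)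
    [Module.Finite ℤ O] :
    Nat.card (HGroup K O) = 2 ^ (r1 + r2 - 1) * Nat.card {c : ClassGroup O // c ^ 2 = 1} := by

  classical
  subst hdeg hr1 hr2
  have hker : Nat.card (FMap K O).ker = 2 ^ Units.rank K := by
    rw [← range_GMap, ← Subgroup.index_ker, ker_GMap K O hodd, index_BUnits K O hodd]
  have hrank : Units.rank K = Nat.card {w : InfinitePlace K // w.IsReal} +
      Nat.card {w : InfinitePlace K // w.IsComplex} - 1 := by
    rw [Units.rank, InfinitePlace.card_eq_nrRealPlaces_add_nrComplexPlaces,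
      Nat.card_eq_fintype_card, Nat.card_eq_fintype_card]
  have hran : Nat.card (FMap K O).range = Nat.card {c : ClassGroup O // c ^ 2 = 1} := by
    refine Nat.card_congr ((ClassGroup.equiv (R := O) K).toEquiv.subtypeEquiv ?_).symm
    intro c
    rw [mem_range_FMap K O hodd]
    change _ ↔ (ClassGroup.equiv (R := O) K c) ^ 2 = 1
    rw [← _root_.map_pow, map_eq_one_iff _ (ClassGroup.equiv (R := O) K).injective]
  rw [← hrank, ← hker, ← hran, ← Subgroup.index_ker, Subgroup.card_mul_index]
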